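/- Let A be a subgroup of (ℤ/nℤ)^×, let d be a positive divisor of n, let ξ ∈ (ℤ/nℤ)^× be a unit, set r = ξ·(n/d), and let ψ_d : ℤ/nℤ → ℤ/dℤ be the natural ring homomorphism. Then for every y ∈ ℤ/nℤ one has σ_{Aξ}(y·(n/d)) = (|A|/|ψ_d(A)|)·σ_{Ar}(y); consequently the image of σ_{Ar} scaled by the factor |A|/|ψ_d(A)| is a subset of the image of σ_{Aξ}. -/

import Mathlib

open Complex

/-- `e(θ) = exp(2πiθ)`. -/
noncomputable def e2 (θ : ℝ) : ℂ := Complex.exp (2 * Real.pi * Complex.I * θ)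

/-- The cyclic supercharacter attached to a subset `X` of `ℤ/nℤ`:
`σ_X(y) = Σ_{x ∈ X} e(xy/n)`. -/
noncomputable def superchar (n : ℕ) (X : Set (ZMod n)) (y : ZMod n) : ℂ :=
  ∑ᶠ x ∈ X, e2 (((x.val * y.val : ℕ) : ℝ) / (n : ℝ))

/-- The orbit `Ar = {ar : a ∈ A}` of `r` under a unit subgroup `A`. -/
def unitOrbit (n : ℕ) (A : Subgroup (ZMod n)ˣ) (r : ZMod n) : Set (ZMod n) :=
  (fun a : (ZMod n)ˣ => (a : ZMod n) * r) '' (A : Set (ZMod n)ˣ)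

lemma e2_eq_char (n : ℕ) [NeZero n] (x y : ZMod n) :
    e2 (((x.val * y.val : ℕ) : ℝ) / (n : ℝ)) = ZMod.stdAddChar (x * y) := by
  have h : x * y = (((x.val * y.val : ℕ) : ℤ) : ZMod n) := by
    push_cast
    simp
  rw [h, ZMod.stdAddChar_coe, e2]
  congr 1
  push_cast
  ring

lemma orbit_key (n d : ℕ) (hn : 0 < n) (hd : 0 < d) (hdvd : d ∣ n) (a b ξ : (ZMod n)ˣ) :
    ((a : ZMod n) * ((ξ : ZMod n) * ((n / d : ℕ) : ZMod n))
      = (b : ZMod n) * ((ξ : ZMod n) * ((n / d : ℕ) : ZMod n))) ↔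
    Units.map (ZMod.castHom hdvd (ZMod d)).toMonoidHom a
      = Units.map (ZMod.castHom hdvd (ZMod d)).toMonoidHom b := by
  haveI : NeZero n := ⟨hn.ne'⟩
  obtain ⟨m, rfl⟩ := hdvd
  have hm : 0 < m := Nat.pos_of_mul_pos_left hn |> fun _ => by
    rcases Nat.eq_zero_or_pos m with h | h
    · simp [h] at hn
    · exact h
  rw [Nat.mul_div_cancel_left m hd]
  have e1 : ∀ c : ZMod (d * m), c * ((m : ℕ) : ZMod (d * m)) = 0 ↔
      ZMod.castHom (Dvd.intro m rfl : d ∣ d * m) (ZMod d) c = 0 := by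
    intro c
    obtain ⟨k, rfl⟩ := ZMod.intCast_surjective c
    rw [map_intCast, ZMod.intCast_zmod_eq_zero_iff_dvd k d]
    have : ((k : ZMod (d * m)) * ((m : ℕ) : ZMod (d * m))) = ((k * m : ℤ) : ZMod (d * m)) := by
      push_cast; rfl
    rw [this, ZMod.intCast_zmod_eq_zero_iff_dvd]
    push_cast
    exact mul_dvd_mul_iff_right (by exact_mod_cast hm.ne')
  have e2' : ∀ c : (ZMod (d * m)), c * ((ξ : ZMod (d * m)) * (m : ZMod (d * m)))
      = (ξ : ZMod (d * m)) * (c * m) := fun c => by ring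
  rw [e2', e2', Units.mul_right_inj, ← sub_eq_zero, ← sub_mul, e1, map_sub, sub_eq_zero, Units.ext_iff]
  rfl

lemma sum_fiber {G H X : Type*} [Group G] [Finite G] [Group H] (A : Subgroup G) (φ : G →* H)
    (g : G → X) (hg : ∀ a b, g a = g b ↔ φ a = φ b) (F : X → ℂ) :
    ∑ᶠ a ∈ (A : Set G), F (g a)
      = ((Nat.card A : ℂ) / (Nat.card (A.map φ) : ℂ)) * ∑ᶠ x ∈ g '' (A : Set G), F x := by
  classical
  haveI := Fintype.ofFinite G
  have h1 : ∑ᶠ a ∈ (A : Set G), F (g a) = ∑ a ∈ (A : Set G).toFinset, F (g a) :=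
    finsum_mem_eq_toFinset_sum _ _
  have h2 : ∑ᶠ x ∈ g '' (A : Set G), F x = ∑ x ∈ (A : Set G).toFinset.image g, F x := by
    rw [← finsum_mem_coe_finset]
    simp
  rw [h1, h2, Finset.sum_comp, Finset.mul_sum]
  refine Finset.sum_congr rfl fun x hx => ?_
  obtain ⟨a, ha, rfl⟩ := Finset.mem_image.1 hx
  have ha' : a ∈ A := by simpa using ha
  rw [nsmul_eq_mul]
  congr 1
  have hc : (({b ∈ (A : Set G).toFinset | g b = g a} : Finset G)).card
      = Nat.card (φ.subgroupMap A).ker := by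
    rw [← Nat.card_eq_finsetCard]
    refine Nat.card_congr
      { toFun := fun b => ⟨⟨b.1 * a⁻¹, ?_⟩, ?_⟩
        invFun := fun k => ⟨k.1.1 * a, ?_⟩
        left_inv := fun b => by simp
        right_inv := fun k => by simp }
    · have hb := (Finset.mem_filter.1 b.2).1
      exact A.mul_mem (by simpa using hb) (A.inv_mem ha')
    · have hb := (Finset.mem_filter.1 b.2).2
      rw [MonoidHom.mem_ker]
      apply Subtype.ext
      change φ (b.1 * a⁻¹) = 1
      rw [map_mul, (hg _ _).1 hb, ← map_mul]
      simp
    · have hk : φ k.1.1 = 1 := congrArg Subtype.val (MonoidHom.mem_ker.1 k.2)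
      refine Finset.mem_filter.2 ⟨by simpa using A.mul_mem k.1.2 ha', ?_⟩
      rw [hg, map_mul, hk, one_mul]
  have hi : Nat.card (φ.subgroupMap A).ker * Nat.card (A.map φ) = Nat.card A := by
    rw [← Subgroup.card_mul_index (φ.subgroupMap A).ker, Subgroup.index_ker,
      MonoidHom.range_eq_top.2 (φ.subgroupMap_surjective A), Subgroup.card_top]
  haveI : Finite (A.map φ) := Finite.of_surjective _ (φ.subgroupMap_surjective A)
  have h0 : (Nat.card (A.map φ) : ℂ) ≠ 0 := by exact_mod_cast Nat.card_pos.ne'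
  rw [hc, eq_div_iff h0]
  exact_mod_cast hi

theorem stmt3 (n d : ℕ) (hn : 0 < n) (hd : 0 < d) (hdvd : d ∣ n)
    (A : Subgroup (ZMod n)ˣ) (ξ : (ZMod n)ˣ) (r : ZMod n)
    (hr : r = (ξ : ZMod n) * ((n / d : ℕ) : ZMod n)) :
    (∀ y : ZMod n,
      superchar n (unitOrbit n A (ξ : ZMod n)) (y * ((n / d : ℕ) : ZMod n))
        = ((Nat.card A : ℂ) /
            (Nat.card (A.map (Units.map (ZMod.castHom hdvd (ZMod d)).toMonoidHom)) : ℂ))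
          * superchar n (unitOrbit n A r) y)
    ∧ (fun z : ℂ =>
        ((Nat.card A : ℂ) /
          (Nat.card (A.map (Units.map (ZMod.castHom hdvd (ZMod d)).toMonoidHom)) : ℂ)) * z) ''
        Set.range (superchar n (unitOrbit n A r))
      ⊆ Set.range (superchar n (unitOrbit n A (ξ : ZMod n))) := by
  haveI : NeZero n := ⟨hn.ne'⟩
  have key : ∀ y : ZMod n,
      superchar n (unitOrbit n A (ξ : ZMod n)) (y * ((n / d : ℕ) : ZMod n))
        = ((Nat.card A : ℂ) /
            (Nat.card (A.map (Units.map (ZMod.castHom hdvd (ZMod d)).toMonoidHom)) : ℂ))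
          * superchar n (unitOrbit n A r) y := by
    intro y
    have h := sum_fiber A (Units.map (ZMod.castHom hdvd (ZMod d)).toMonoidHom)
      (fun a : (ZMod n)ˣ => (a : ZMod n) * r)
      (fun a b => by subst hr; exact orbit_key n d hn hd hdvd a b ξ)
      (fun x => (ZMod.stdAddChar (x * y) : ℂ))
    simp only [superchar, unitOrbit, e2_eq_char]
    rw [← h, finsum_mem_image]
    · refine finsum_congr fun a => finsum_congr fun _ => ?_
      rw [hr]
      congr 1
      ring
    · intro a _ b _ hab
      exact Units.ext ((Units.mul_left_inj ξ).1 hab)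
  refine ⟨key, ?_⟩
  rintro _ ⟨_, ⟨y, rfl⟩, rfl⟩
  exact ⟨_, key y⟩
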